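/- arXiv:2409.02506 — 4 statements merged into one kernel-verified Lean document; each statement's English description precedes it below -/
import Mathlib

section
/- For every unitary 2×2 complex matrix U there exist real numbers α, β, γ, δ such that U = e^{iα}·Rz(β)·Ry(γ)·Rz(δ), i.e. U equals the matrix [[e^{i(α−β/2−δ/2)}cos(γ/2), −e^{i(α−β/2+δ/2)}sin(γ/2)],[e^{i(α+β/2−δ/2)}sin(γ/2), e^{i(α+β/2+δ/2)}cos(γ/2)]]. -/
open Matrix Complex

noncomputable section

/-- Rz(θ) := diag(e^{-iθ/2}, e^{iθ/2}) -/
def Rz (θ : ℝ) : Matrix (Fin 2) (Fin 2) ℂ :=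
  !![Complex.exp (-((θ : ℂ)/2) * Complex.I), 0; 0, Complex.exp (((θ : ℂ)/2) * Complex.I)]

/-- Ry(θ) := [[cos(θ/2), -sin(θ/2)],[sin(θ/2), cos(θ/2)]] -/
def Ry (θ : ℝ) : Matrix (Fin 2) (Fin 2) ℂ :=
  !![(Real.cos (θ/2) : ℂ), -(Real.sin (θ/2) : ℂ);
     (Real.sin (θ/2) : ℂ),  (Real.cos (θ/2) : ℂ)]

/-- A matrix is unitary if U·Uᴴ = Uᴴ·U = I. -/
def IsUnitary (U : Matrix (Fin 2) (Fin 2) ℂ) : Prop := U * Uᴴ = 1 ∧ Uᴴ * U = 1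

/-!
A unitary matrix satisfies `adj U = det U • Uᴴ`, so in dimension two its second column is determined
by the first column `(a, c)` and the determinant. Since `‖a‖² + ‖c‖² = 1`, the first column is
`(e^{iφ} cos θ, e^{iψ} sin θ)`, and `det U = e^{iη}`. Comparing phases with the product
`e^{iα} Rz(β) Ry(γ) Rz(δ)` leaves a linear system for the angles, solved by
`α = η/2`, `β = ψ - φ`, `γ = 2θ`, `δ = η - φ - ψ`.
-/

theorem adjugate_eq_det_smul_of_mul_eq_one {n R : Type*} [Fintype n] [DecidableEq n] [CommRing R]
    {A B : Matrix n n R} (h : A * B = 1) : adjugate A = A.det • B :=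
  calc
    adjugate A = adjugate A * (A * B) := by rw [h, mul_one]
    _ = A.det • B := by rw [← mul_assoc, adjugate_mul, smul_mul_assoc, one_mul]

theorem eq_of_mem_unitaryGroup_fin_two {R : Type*} [CommRing R] [StarRing R]
    {U : Matrix (Fin 2) (Fin 2) R} (hU : U ∈ unitaryGroup (Fin 2) R) :
    U = !![U 0 0, -(U.det * star (U 1 0)); U 1 0, U.det * star (U 0 0)] := by
  have hadj : !![U 1 1, -U 0 1; -U 1 0, U 0 0] = U.det • star U := by
    rw [← adjugate_fin_two, adjugate_eq_det_smul_of_mul_eq_one (mem_unitaryGroup_iff.mp hU)]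
  have h11 : U 1 1 = U.det * star (U 0 0) := by
    simpa [star_apply] using congrFun₂ hadj 0 0
  have h01 : -U 0 1 = U.det * star (U 1 0) := by
    simpa [star_apply] using congrFun₂ hadj 0 1
  rw [← h11, ← h01, neg_neg]
  exact eta_fin_two U

theorem sum_norm_sq_col_of_conjTranspose_mul_self_eq_one {m n 𝕜 : Type*} [Fintype m]
    [DecidableEq n] [RCLike 𝕜] {U : Matrix m n 𝕜} (hU : Uᴴ * U = 1) (j : n) :
    ∑ i, ‖U i j‖ ^ 2 = 1 := by
  have hdiag : (Uᴴ * U) j j = 1 := by rw [hU, one_apply_eq]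
  simp only [mul_apply, conjTranspose_apply, RCLike.star_def, RCLike.conj_mul] at hdiag
  exact_mod_cast hdiag

theorem exists_cos_sin_eq_of_sq_add_sq_eq_one {x y : ℝ} (h : x ^ 2 + y ^ 2 = 1) :
    ∃ θ : ℝ, Real.cos θ = x ∧ Real.sin θ = y := by
  have hnorm : ‖(⟨x, y⟩ : ℂ)‖ = 1 := by
    rw [← sq_eq_sq₀ (norm_nonneg _) zero_le_one, Complex.sq_norm, normSq_mk]
    linarith
  obtain ⟨θ, hθ⟩ := (Complex.norm_eq_one_iff _).mp hnorm
  exact ⟨θ, by rw [← exp_ofReal_mul_I_re, hθ], by rw [← exp_ofReal_mul_I_im, hθ]⟩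

theorem exists_eq_exp_mul_cos_and_eq_exp_mul_sin {a c : ℂ} (h : ‖a‖ ^ 2 + ‖c‖ ^ 2 = 1) :
    ∃ φ ψ θ : ℝ, a = exp (φ * I) * Real.cos θ ∧ c = exp (ψ * I) * Real.sin θ := by
  obtain ⟨θ, hcos, hsin⟩ := exists_cos_sin_eq_of_sq_add_sq_eq_one h
  refine ⟨a.arg, c.arg, θ, ?_, ?_⟩
  · rw [hcos, mul_comm, norm_mul_exp_arg_mul_I]
  · rw [hsin, mul_comm, norm_mul_exp_arg_mul_I]

theorem exp_mul_I_mul_star_exp_mul_I_mul_ofReal (η φ r : ℝ) :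
    exp (η * I) * star (exp (φ * I) * r) = exp ((η - φ : ℝ) * I) * r := by
  rw [star_def, map_mul, conj_ofReal, ← exp_conj, map_mul, conj_ofReal, conj_I, ← mul_assoc,
    ← exp_add]
  congr 2
  push_cast
  ring

theorem IsUnitary.mem_unitaryGroup {U : Matrix (Fin 2) (Fin 2) ℂ} (hU : IsUnitary U) :
    U ∈ unitaryGroup (Fin 2) ℂ :=
  mem_unitaryGroup_iff.mpr hU.1

theorem exists_phases_of_mem_unitaryGroup_fin_two {U : Matrix (Fin 2) (Fin 2) ℂ}
    (hU : U ∈ unitaryGroup (Fin 2) ℂ) :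
    ∃ η φ ψ θ : ℝ,
      U = !![exp (φ * I) * Real.cos θ, -(exp ((η - ψ : ℝ) * I) * Real.sin θ);
             exp (ψ * I) * Real.sin θ, exp ((η - φ : ℝ) * I) * Real.cos θ] := by
  have hcol : ‖U 0 0‖ ^ 2 + ‖U 1 0‖ ^ 2 = 1 := by
    simpa only [Fin.sum_univ_two] using
      sum_norm_sq_col_of_conjTranspose_mul_self_eq_one (mem_unitaryGroup_iff'.mp hU) 0
  obtain ⟨φ, ψ, θ, ha, hc⟩ := exists_eq_exp_mul_cos_and_eq_exp_mul_sin hcol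
  obtain ⟨η, hη⟩ := (Complex.norm_eq_one_iff U.det).mp
    (CStarRing.norm_of_mem_unitary (det_of_mem_unitary hU))
  refine ⟨η, φ, ψ, θ, (eq_of_mem_unitaryGroup_fin_two hU).trans ?_⟩
  simp only [ha, hc, ← hη, exp_mul_I_mul_star_exp_mul_I_mul_ofReal]

theorem exp_smul_Rz_mul_Ry_mul_Rz (α β γ δ : ℝ) :
    exp (α * I) • (Rz β * Ry γ * Rz δ) =
      !![exp ((α - β / 2 - δ / 2 : ℝ) * I) * Real.cos (γ / 2),
         -(exp ((α - β / 2 + δ / 2 : ℝ) * I) * Real.sin (γ / 2));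
         exp ((α + β / 2 - δ / 2 : ℝ) * I) * Real.sin (γ / 2),
         exp ((α + β / 2 + δ / 2 : ℝ) * I) * Real.cos (γ / 2)] := by
  have hexp (x y z : ℂ) : exp ((x + y + z) * I) = exp (x * I) * exp (y * I) * exp (z * I) := by
    rw [add_mul, add_mul, exp_add, exp_add]
  simp only [Rz, Ry, sub_eq_add_neg, ofReal_add, ofReal_neg, ofReal_div, ofReal_ofNat, hexp]
  simp only [mul_fin_two, smul_of, smul_cons, smul_empty, smul_eq_mul]
  ext i j
  fin_cases i <;> fin_cases j <;> dsimp <;> ring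

theorem zyz_decomposition (U : Matrix (Fin 2) (Fin 2) ℂ) (hU : IsUnitary U) :
    ∃ α β γ δ : ℝ,
      U = Complex.exp ((α : ℂ) * Complex.I) • (Rz β * Ry γ * Rz δ) ∧
      U = !![Complex.exp (((α - β/2 - δ/2 : ℝ) : ℂ) * Complex.I) * (Real.cos (γ/2) : ℂ),
             -(Complex.exp (((α - β/2 + δ/2 : ℝ) : ℂ) * Complex.I) * (Real.sin (γ/2) : ℂ));
             Complex.exp (((α + β/2 - δ/2 : ℝ) : ℂ) * Complex.I) * (Real.sin (γ/2) : ℂ),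
             Complex.exp (((α + β/2 + δ/2 : ℝ) : ℂ) * Complex.I) * (Real.cos (γ/2) : ℂ)] := by
  obtain ⟨η, φ, ψ, θ, hphases⟩ := exists_phases_of_mem_unitaryGroup_fin_two hU.mem_unitaryGroup
  refine ⟨η / 2, ψ - φ, 2 * θ, η - φ - ψ, ?_⟩
  have h00 : η / 2 - (ψ - φ) / 2 - (η - φ - ψ) / 2 = φ := by ring
  have h01 : η / 2 - (ψ - φ) / 2 + (η - φ - ψ) / 2 = η - ψ := by ring
  have h10 : η / 2 + (ψ - φ) / 2 - (η - φ - ψ) / 2 = ψ := by ring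
  have h11 : η / 2 + (ψ - φ) / 2 + (η - φ - ψ) / 2 = η - φ := by ring
  have hangle : 2 * θ / 2 = θ := by ring
  rw [exp_smul_Rz_mul_Ry_mul_Rz, and_self, h00, h01, h10, h11, hangle]
  exact hphases

end
end

section
/- For every unitary 2×2 complex matrix U there exist real numbers α, β, γ, δ such that, setting A := Rz(β)·Ry(γ/2), B := Ry(−γ/2)·Rz(−(δ+β)/2), and C := Rz((δ−β)/2), one has A·B·C = I and U = e^{iα}·A·X·B·X·C. -/
/-!
Conjugation by `X` reverses both `Rz` and `Ry`. Hence in `A * B * C` the rotations cancel, while in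
`A * X * B * X * C` they add up to `Rz β * Ry γ * Rz δ`, and it remains to find Z-Y-Z Euler angles.
Dividing `U` by a square root of its determinant leaves a matrix with first column `(a, c)` and
second column `(-star c, star a)`, where `‖a‖ ^ 2 + ‖c‖ ^ 2 = 1`. The Hopf coordinates
`a = cos θ * exp (i * p)`, `c = sin θ * exp (i * q)` of the 3-sphere are the required angles, up to
the linear change `β = q - p`, `γ = 2 * θ`, `δ = -(p + q)`.
-/

open Matrix Complex

noncomputable section

/-- Pauli X -/
def X : Matrix (Fin 2) (Fin 2) ℂ := !![0, 1; 1, 0]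

section Rotations

lemma Rz_zero : Rz 0 = 1 := by
  simp [Rz, one_fin_two]

lemma Ry_zero : Ry 0 = 1 := by
  simp [Ry, one_fin_two]

lemma Rz_mul_Rz (a b : ℝ) : Rz a * Rz b = Rz (a + b) := by
  simp only [Rz, mul_fin_two, mul_zero, zero_mul, add_zero, zero_add, ← Complex.exp_add]
  push_cast
  ring_nf

lemma Ry_mul_Ry (a b : ℝ) : Ry a * Ry b = Ry (a + b) := by
  simp only [Ry, mul_fin_two, add_div, Real.cos_add, Real.sin_add]
  push_cast
  ring_nf

lemma X_mul_X : X * X = 1 := by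
  simp [X, one_fin_two]

lemma X_mul_Rz_mul_X (θ : ℝ) : X * Rz θ * X = Rz (-θ) := by
  simp [X, Rz, neg_div]

lemma X_mul_Ry_mul_X (θ : ℝ) : X * Ry θ * X = Ry (-θ) := by
  simp [X, Ry, neg_div]

lemma X_mul_Ry_mul_Rz_mul_X (a b : ℝ) : X * (Ry a * Rz b) * X = Ry (-a) * Rz (-b) := calc
  X * (Ry a * Rz b) * X = X * Ry a * (X * X) * Rz b * X := by
    simp only [X_mul_X, Matrix.mul_one, Matrix.mul_assoc]
  _ = (X * Ry a * X) * (X * Rz b * X) := by simp only [Matrix.mul_assoc]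
  _ = Ry (-a) * Rz (-b) := by rw [X_mul_Ry_mul_X, X_mul_Rz_mul_X]

lemma Rz_mul_Ry_mul_Ry_neg_mul_Rz_mul_Rz (β γ φ ψ : ℝ) :
    Rz β * Ry γ * (Ry (-γ) * Rz φ) * Rz ψ = Rz (β + φ + ψ) := calc
  _ = Rz β * (Ry γ * Ry (-γ)) * Rz φ * Rz ψ := by simp only [Matrix.mul_assoc]
  _ = Rz (β + φ + ψ) := by
    rw [Ry_mul_Ry, add_neg_cancel, Ry_zero, Matrix.mul_one, Rz_mul_Rz, Rz_mul_Rz]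

lemma Rz_mul_Ry_mul_X_mul_Ry_neg_mul_Rz_mul_X_mul_Rz (β γ φ ψ : ℝ) :
    Rz β * Ry γ * X * (Ry (-γ) * Rz φ) * X * Rz ψ = Rz β * Ry (γ + γ) * Rz (ψ - φ) := calc
  _ = Rz β * Ry γ * (X * (Ry (-γ) * Rz φ) * X) * Rz ψ := by simp only [Matrix.mul_assoc]
  _ = Rz β * (Ry γ * Ry γ) * (Rz (-φ) * Rz ψ) := by
    rw [X_mul_Ry_mul_Rz_mul_X, neg_neg]
    simp only [Matrix.mul_assoc]
  _ = Rz β * Ry (γ + γ) * Rz (ψ - φ) := by rw [Ry_mul_Ry, Rz_mul_Rz, neg_add_eq_sub]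

lemma Rz_mul_Ry_mul_Rz (β γ δ : ℝ) :
    Rz β * Ry γ * Rz δ =
      !![Real.cos (γ / 2) * exp (-((β + δ) / 2) * I),
           -(Real.sin (γ / 2) * exp (-((β - δ) / 2) * I));
         Real.sin (γ / 2) * exp ((β - δ) / 2 * I), Real.cos (γ / 2) * exp ((β + δ) / 2 * I)] := by
  have exp_mul_mul_exp {x y z : ℂ} (r : ℂ) (h : x + y = z) : exp x * r * exp y = r * exp z := by
    rw [← h, Complex.exp_add]
    ring
  simp only [Rz, Ry, mul_fin_two, mul_zero, zero_mul, add_zero, zero_add]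
  rw [exp_mul_mul_exp _ (by ring : _ = -((β + δ) / 2 : ℂ) * I),
    exp_mul_mul_exp _ (by ring : _ = -((β - δ) / 2 : ℂ) * I),
    exp_mul_mul_exp _ (by ring : _ = (β - δ) / 2 * I),
    exp_mul_mul_exp _ (by ring : _ = (β + δ) / 2 * I), neg_mul (Real.sin (γ / 2) : ℂ)]

end Rotations

section SpecialUnitary

variable {n R : Type*} [Fintype n] [DecidableEq n] [CommRing R] [StarRing R]

lemma adjugate_eq_star_of_mem_specialUnitaryGroup {A : Matrix n n R}
    (hA : A ∈ specialUnitaryGroup n R) : A.adjugate = star A := by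
  obtain ⟨hA, hdet⟩ := mem_specialUnitaryGroup_iff.mp hA
  calc A.adjugate = A.adjugate * (A * star A) := by
        rw [mem_unitaryGroup_iff.mp hA, Matrix.mul_one]
    _ = star A := by rw [← Matrix.mul_assoc, adjugate_mul, hdet, one_smul, Matrix.one_mul]

lemma mem_specialUnitaryGroup_fin_two_iff {A : Matrix (Fin 2) (Fin 2) R} :
    A ∈ specialUnitaryGroup (Fin 2) R ↔
      A 0 1 = -star (A 1 0) ∧ A 1 1 = star (A 0 0) ∧
        A 0 0 * star (A 0 0) + A 1 0 * star (A 1 0) = 1 := by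
  constructor
  · intro hA
    have hadj := adjugate_eq_star_of_mem_specialUnitaryGroup hA
    have h₀₁ : A 0 1 = -star (A 1 0) := by
      simpa [adjugate_fin_two, neg_eq_iff_eq_neg] using congr_fun₂ hadj 0 1
    have h₁₁ : A 1 1 = star (A 0 0) := by
      simpa [adjugate_fin_two] using congr_fun₂ hadj 0 0
    have hdet := (mem_specialUnitaryGroup_iff.mp hA).2
    rw [det_fin_two, h₀₁, h₁₁] at hdet
    exact ⟨h₀₁, h₁₁, by linear_combination hdet⟩
  · rintro ⟨h₀₁, h₁₁, hnorm⟩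
    have hdet : A.det = 1 := by
      rw [det_fin_two, h₀₁, h₁₁]
      linear_combination hnorm
    have hstar : star A = A.adjugate := by
      rw [adjugate_fin_two, star_eq_conjTranspose, eta_fin_two Aᴴ]
      simp [h₀₁, h₁₁]
    refine mem_specialUnitaryGroup_iff.mpr ⟨mem_unitaryGroup_iff.mpr ?_, hdet⟩
    rw [hstar, mul_adjugate, hdet, one_smul]

lemma exists_eq_exp_smul_of_mem_unitaryGroup [Nonempty n] {U : Matrix n n ℂ}
    (hU : U ∈ unitaryGroup n ℂ) :
    ∃ α : ℝ, ∃ V ∈ specialUnitaryGroup n ℂ, U = exp (α * I) • V := by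
  obtain ⟨t, ht⟩ : ∃ t : ℝ, exp (t * I) = U.det :=
    (norm_eq_one_iff _).mp (CStarRing.norm_of_mem_unitary (det_of_mem_unitary hU))
  let α : ℝ := t / Fintype.card n
  have hα : Fintype.card n * (α : ℂ) = t := by
    simp only [α, ofReal_div, ofReal_natCast]
    exact mul_div_cancel₀ _ (Nat.cast_ne_zero.mpr Fintype.card_ne_zero)
  have hphase : exp (-(α * I)) ∈ unitary ℂ := by
    rw [Unitary.mem_iff_star_mul_self, star_def, ← exp_conj, ← Complex.exp_add]
    simp
  refine ⟨α, exp (-(α * I)) • U, mem_specialUnitaryGroup_iff.mpr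
    ⟨Unitary.smul_mem_of_mem hphase hU, ?_⟩, ?_⟩
  · rw [det_smul, ← ht, ← Complex.exp_nat_mul, mul_neg, ← mul_assoc, hα, ← Complex.exp_add,
      neg_add_cancel, Complex.exp_zero]
  · rw [smul_smul, ← Complex.exp_add, add_neg_cancel, Complex.exp_zero, one_smul]

end SpecialUnitary

section EulerAngles

lemma exists_eq_cos_mul_exp_and_eq_sin_mul_exp {a c : ℂ} (h : ‖a‖ ^ 2 + ‖c‖ ^ 2 = 1) :
    ∃ θ p q : ℝ, a = Real.cos θ * exp (p * I) ∧ c = Real.sin θ * exp (q * I) := by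
  have hcos : Real.cos (Real.arccos ‖a‖) = ‖a‖ :=
    Real.cos_arccos (by linarith [norm_nonneg a]) (by nlinarith [sq_nonneg ‖c‖])
  have hsin : Real.sin (Real.arccos ‖a‖) = ‖c‖ := by
    rw [Real.sin_arccos, ← h, add_sub_cancel_left, Real.sqrt_sq (norm_nonneg c)]
  refine ⟨Real.arccos ‖a‖, a.arg, c.arg, ?_, ?_⟩
  · rw [hcos, norm_mul_exp_arg_mul_I]
  · rw [hsin, norm_mul_exp_arg_mul_I]

lemma exists_eq_Rz_mul_Ry_mul_Rz {V : Matrix (Fin 2) (Fin 2) ℂ}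
    (hV : V ∈ specialUnitaryGroup (Fin 2) ℂ) : ∃ β γ δ : ℝ, V = Rz β * Ry γ * Rz δ := by
  obtain ⟨h₀₁, h₁₁, hnorm⟩ := mem_specialUnitaryGroup_fin_two_iff.mp hV
  have hsphere : ‖V 0 0‖ ^ 2 + ‖V 1 0‖ ^ 2 = 1 := by
    simp only [star_def, mul_conj'] at hnorm
    exact_mod_cast hnorm
  obtain ⟨θ, p, q, h₀₀, h₁₀⟩ := exists_eq_cos_mul_exp_and_eq_sin_mul_exp hsphere
  have hdiff : (((q - p : ℝ) : ℂ) - ((-(p + q) : ℝ) : ℂ)) / 2 = q := by push_cast; ring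
  have hsum : (((q - p : ℝ) : ℂ) + ((-(p + q) : ℝ) : ℂ)) / 2 = -p := by push_cast; ring
  have star_mul_exp (r s : ℝ) : star ((r : ℂ) * exp (s * I)) = r * exp (-s * I) := by
    simp [← exp_conj]
  refine ⟨q - p, 2 * θ, -(p + q), ?_⟩
  rw [Rz_mul_Ry_mul_Rz, mul_div_cancel_left₀ θ two_ne_zero, hdiff, hsum, neg_neg, eta_fin_two V,
    h₀₁, h₁₁, h₀₀, h₁₀, star_mul_exp, star_mul_exp]

lemma IsUnitary.exists_eq_exp_smul_Rz_mul_Ry_mul_Rz {U : Matrix (Fin 2) (Fin 2) ℂ}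
    (hU : IsUnitary U) : ∃ α β γ δ : ℝ, U = exp (α * I) • (Rz β * Ry γ * Rz δ) := by
  obtain ⟨α, V, hV, rfl⟩ := exists_eq_exp_smul_of_mem_unitaryGroup (mem_unitaryGroup_iff.mpr hU.1)
  obtain ⟨β, γ, δ, rfl⟩ := exists_eq_Rz_mul_Ry_mul_Rz hV
  exact ⟨α, β, γ, δ, rfl⟩

end EulerAngles

theorem axbxc_decomposition (U : Matrix (Fin 2) (Fin 2) ℂ) (hU : IsUnitary U) :
    ∃ α β γ δ : ℝ,
      Rz β * Ry (γ/2) * (Ry (-γ/2) * Rz (-(δ+β)/2)) * Rz ((δ-β)/2) = 1 ∧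
      U = Complex.exp ((α : ℂ) * Complex.I) •
        (Rz β * Ry (γ/2) * X * (Ry (-γ/2) * Rz (-(δ+β)/2)) * X * Rz ((δ-β)/2)) := by
  obtain ⟨α, β, γ, δ, rfl⟩ := hU.exists_eq_exp_smul_Rz_mul_Ry_mul_Rz
  have hz : β + -(δ + β) / 2 + (δ - β) / 2 = 0 := by ring
  have hδ : (δ - β) / 2 - -(δ + β) / 2 = δ := by ring
  refine ⟨α, β, γ, δ, ?_, ?_⟩
  · rw [neg_div, Rz_mul_Ry_mul_Ry_neg_mul_Rz_mul_Rz, hz, Rz_zero]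
  · rw [neg_div, Rz_mul_Ry_mul_X_mul_Ry_neg_mul_Rz_mul_X_mul_Rz, add_halves, hδ]

end
end

section
/- Let k ≥ 1 be a natural number and R_k := diag(1, e^{2πi/2^k}). If there exist unitary 2×2 complex matrices U₁, U₂ and a real number φ such that U₁·U₂ = I and U₁·X·U₂ = e^{iφ}·R_k, then k = 1. (That is, an ancilla-free controlled-R_k cannot be implemented with only one CNOT gate, single-qubit gates on the target, and a phase gate on the control, unless R_k = Z.) -/
open Matrix Complex

noncomputable section

/-- R_k := diag(1, e^{2πi/2^k}). -/
def Rk (k : ℕ) : Matrix (Fin 2) (Fin 2) ℂ :=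
  !![1, 0; 0, Complex.exp (2 * (Real.pi : ℂ) * Complex.I / (2 ^ k : ℂ))]

/-!
Conjugation preserves the trace, and `X` is traceless, so `R_k` must be traceless as well. This says
that the primitive `2 ^ k`-th root of unity in its lower right corner is `-1`, hence `2 ^ k = 2`.
The determinant, also invariant under conjugation, rules out a vanishing scalar in front of `R_k`.
-/

theorem trace_X : X.trace = 0 := by
  simp [X]

theorem det_X : X.det = -1 := by
  simp [X]

theorem isPrimitiveRoot_Rk_apply_one_one (k : ℕ) : IsPrimitiveRoot (Rk k 1 1) (2 ^ k) := by
  simpa [Rk] using isPrimitiveRoot_exp (2 ^ k) (by positivity)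

theorem trace_Rk (k : ℕ) : (Rk k).trace = 1 + Rk k 1 1 := by
  simp [Rk]

theorem eq_one_of_trace_Rk_eq_zero {k : ℕ} (h : (Rk k).trace = 0) : k = 1 := by
  have hneg : Rk k 1 1 = -1 := by linear_combination h - trace_Rk k
  have horder : 2 ^ k = 2 :=
    (hneg ▸ isPrimitiveRoot_Rk_apply_one_one k).unique (.neg_one 0 two_ne_zero.symm)
  exact Nat.pow_right_injective le_rfl (by simpa using horder)

theorem no_single_CNOT_controlled_Rk_general {k : ℕ} {U₁ U₂ : Matrix (Fin 2) (Fin 2) ℂ} {c : ℂ}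
    (hU : U₁ * U₂ = 1) (h : U₁ * X * U₂ = c • Rk k) : k = 1 := by
  have hU₁ : IsUnit U₁ := .of_mul_eq_one U₂ hU
  obtain rfl : U₁⁻¹ = U₂ := inv_eq_right_inv hU
  have htrace : c * (Rk k).trace = 0 := by
    rw [← smul_eq_mul, ← trace_smul, ← h, trace_conj hU₁, trace_X]
  have hdet : (c • Rk k).det = -1 := by
    rw [← h, det_conj hU₁, det_X]
  have hc : c ≠ 0 := by
    rintro rfl
    simp at hdet
  exact eq_one_of_trace_Rk_eq_zero ((mul_eq_zero_iff_left hc).mp htrace)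

theorem no_single_CNOT_controlled_Rk (k : ℕ) (hk : 1 ≤ k)
    (h : ∃ (U₁ U₂ : Matrix (Fin 2) (Fin 2) ℂ) (φ : ℝ),
      IsUnitary U₁ ∧ IsUnitary U₂ ∧ U₁ * U₂ = 1 ∧
      U₁ * X * U₂ = Complex.exp ((φ : ℂ) * Complex.I) • Rk k) :
    k = 1 := by
  obtain ⟨_, _, _, -, -, hU, hconj⟩ := h
  exact no_single_CNOT_controlled_Rk_general hU hconj

end
end

section
/- Let θ be a real number, M := diag(1, e^{2iθ}) and P := diag(1, e^{-iθ}). Then in ℂ²⊗ℂ², ((H·P) ⊗ I₂)·C(M·X)·((1/√2)(e₀+e₁) ⊗ e₀) = (1/√2)·(e₀ ⊗ v₊ + e₁ ⊗ v₋), where v₊ := (1/√2)(e₀ + e^{iθ}e₁) and v₋ := (1/√2)(e₀ − e^{iθ}e₁). (This is the correctness of the fault-tolerant measurement circuit preparing the ancilla state: outcome 0 of the first qubit leaves the second qubit in v₊ and outcome 1 leaves it in v₋.) -/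
open Matrix Complex Kronecker

noncomputable section

/-- The Hadamard gate. -/
def H : Matrix (Fin 2) (Fin 2) ℂ := ((Real.sqrt 2 : ℂ))⁻¹ • !![1, 1; 1, -1]

/-- The controlled-U gate: block-diagonal diag(I₂, U) on ℂ²⊗ℂ²
(first factor = control, basis ordering |00⟩,|01⟩,|10⟩,|11⟩). -/
def ctrl (U : Matrix (Fin 2) (Fin 2) ℂ) : Matrix (Fin 2 × Fin 2) (Fin 2 × Fin 2) ℂ :=
  Matrix.of fun p q =>
    if p.1 = 0 ∧ q.1 = 0 then (1 : Matrix (Fin 2) (Fin 2) ℂ) p.2 q.2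
    else if p.1 = 1 ∧ q.1 = 1 then U p.2 q.2
    else 0

/-- Tensor (Kronecker) product of two vectors in ℂ². -/
def tp (v w : Fin 2 → ℂ) : Fin 2 × Fin 2 → ℂ := fun p => v p.1 * w p.2

/-!
The circuit measures `U = M X` by phase kickback. The states `v₊` and `v₋` are eigenvectors of `U`
with eigenvalues `e^{iθ}` and `-e^{iθ}`, so on `v±` the controlled gate only multiplies the
`e₁`-component of the control by `±e^{iθ}`. The gate `P` reduces this phase to `±1`, and `H` turns
`(1/√2)(e₀ ± e₁)` into `e₀` or `e₁`. Linearity applied to `e₀ = (1/√2)(v₊ + v₋)` gives the result.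
-/

/-- The phase gate `diag(1, z)`; `M` and `P` are the cases `z = e^{2iθ}` and `z = e^{-iθ}`.
It is unitary only for `‖z‖ = 1`, which is not imposed. -/
def phaseGate (z : ℂ) : Matrix (Fin 2) (Fin 2) ℂ := !![1, 0; 0, z]

/-- The vector `(1/√2)(e₀ + z e₁)`, which for `‖z‖ = 1` is a state on the equator of the Bloch
sphere; `v₊` and `v₋` are the cases `z = e^{iθ}` and `z = -e^{iθ}`. -/
def equatorState (z : ℂ) : Fin 2 → ℂ := ![1 / (Real.sqrt 2 : ℂ), z / (Real.sqrt 2 : ℂ)]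

/-- The circuit that measures a gate `U` with eigenvalues `ω` and `-ω`: a controlled `U`, then the
phase correction `diag(1, ω⁻¹)` and a Hadamard gate on the control. The readout of the control
is not part of it. -/
def measurementCircuit (U : Matrix (Fin 2) (Fin 2) ℂ) (ω : ℂ) :
    Matrix (Fin 2 × Fin 2) (Fin 2 × Fin 2) ℂ :=
  ((H * phaseGate ω⁻¹) ⊗ₖ (1 : Matrix (Fin 2) (Fin 2) ℂ)) * ctrl U

theorem tp_add (a v w : Fin 2 → ℂ) : tp a (v + w) = tp a v + tp a w := by
  ext p
  exact mul_add _ _ _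

theorem tp_smul (c : ℂ) (a v : Fin 2 → ℂ) : tp a (c • v) = c • tp a v := by
  ext p
  exact mul_left_comm _ _ _

theorem kronecker_mulVec_tp (A B : Matrix (Fin 2) (Fin 2) ℂ) (a v : Fin 2 → ℂ) :
    (A ⊗ₖ B) *ᵥ tp a v = tp (A *ᵥ a) (B *ᵥ v) := by
  ext ⟨i, j⟩
  simp only [mulVec, dotProduct, tp, kroneckerMap_apply, Fintype.sum_prod_type,
    Finset.sum_mul_sum, mul_mul_mul_comm]

theorem ctrl_mulVec_tp (U : Matrix (Fin 2) (Fin 2) ℂ) (a v : Fin 2 → ℂ) :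
    ctrl U *ᵥ tp a v = tp ![a 0, 0] v + tp ![0, a 1] (U *ᵥ v) := by
  ext ⟨i, j⟩
  fin_cases i <;> fin_cases j <;>
    simp [ctrl, tp, mulVec, dotProduct, Fintype.sum_prod_type, mul_add, mul_left_comm (a 1)]

theorem phaseGate_mulVec (z : ℂ) (a : Fin 2 → ℂ) : phaseGate z *ᵥ a = ![a 0, z * a 1] := by
  ext i
  fin_cases i <;> simp [phaseGate, mulVec, dotProduct]

theorem phaseGate_mulVec_equatorState (z w : ℂ) :
    phaseGate z *ᵥ equatorState w = equatorState (z * w) := by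
  rw [phaseGate_mulVec]
  simp [equatorState, mul_div_assoc]

theorem ctrl_mulVec_tp_of_eigenvector {U : Matrix (Fin 2) (Fin 2) ℂ} {μ : ℂ} {v : Fin 2 → ℂ}
    (hv : U *ᵥ v = μ • v) (a : Fin 2 → ℂ) :
    ctrl U *ᵥ tp a v = tp (phaseGate μ *ᵥ a) v := by
  rw [ctrl_mulVec_tp, hv, phaseGate_mulVec]
  ext ⟨i, j⟩
  fin_cases i <;> simp [tp, mul_left_comm, mul_assoc]

theorem inv_sqrt_two_mul_self : (Real.sqrt 2 : ℂ)⁻¹ * (Real.sqrt 2 : ℂ)⁻¹ = 2⁻¹ := by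
  rw [← mul_inv, ← Complex.ofReal_mul, Real.mul_self_sqrt zero_le_two, Complex.ofReal_ofNat]

theorem H_mulVec_equatorState (z : ℂ) : H *ᵥ equatorState z = ![(1 + z) / 2, (1 - z) / 2] := by
  have hadd : (Real.sqrt 2 : ℂ)⁻¹ * (Real.sqrt 2 : ℂ)⁻¹ +
      (Real.sqrt 2 : ℂ)⁻¹ * (z / (Real.sqrt 2 : ℂ)) = (1 + z) / 2 := by
    linear_combination (1 + z) * inv_sqrt_two_mul_self
  have hsub : (Real.sqrt 2 : ℂ)⁻¹ * (Real.sqrt 2 : ℂ)⁻¹ -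
      (Real.sqrt 2 : ℂ)⁻¹ * (z / (Real.sqrt 2 : ℂ)) = (1 - z) / 2 := by
    linear_combination (1 - z) * inv_sqrt_two_mul_self
  ext i
  fin_cases i
  · simpa [H, equatorState, mulVec, dotProduct] using hadd
  · simpa [H, equatorState, mulVec, dotProduct, sub_eq_add_neg] using hsub

theorem measurementCircuit_mulVec_of_eigenvector {U : Matrix (Fin 2) (Fin 2) ℂ} {μ : ℂ}
    {v : Fin 2 → ℂ} (hv : U *ᵥ v = μ • v) (ω : ℂ) :
    measurementCircuit U ω *ᵥ tp (equatorState 1) v = tp (H *ᵥ equatorState (ω⁻¹ * μ)) v := by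
  rw [measurementCircuit, ← mulVec_mulVec, ctrl_mulVec_tp_of_eigenvector hv, kronecker_mulVec_tp,
    one_mulVec, ← mulVec_mulVec, phaseGate_mulVec_equatorState, phaseGate_mulVec_equatorState,
    mul_one]

theorem measurementCircuit_mulVec_add {U : Matrix (Fin 2) (Fin 2) ℂ} {ω : ℂ} (hω : ω ≠ 0)
    {v w : Fin 2 → ℂ} (hv : U *ᵥ v = ω • v) (hw : U *ᵥ w = (-ω) • w) :
    measurementCircuit U ω *ᵥ tp (equatorState 1) (v + w) = tp ![1, 0] v + tp ![0, 1] w := by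
  have hplus : H *ᵥ equatorState 1 = ![1, 0] := by
    rw [H_mulVec_equatorState]
    norm_num
  have hminus : H *ᵥ equatorState (-1) = ![0, 1] := by
    rw [H_mulVec_equatorState]
    norm_num
  rw [tp_add, mulVec_add, measurementCircuit_mulVec_of_eigenvector hv,
    measurementCircuit_mulVec_of_eigenvector hw, mul_neg, inv_mul_cancel₀ hω, hplus, hminus]

theorem phaseGate_sq_mul_X_mulVec_equatorState (ω : ℂ) :
    (phaseGate (ω ^ 2) * X) *ᵥ equatorState ω = ω • equatorState ω := by
  have hX : X *ᵥ equatorState ω = ![ω / (Real.sqrt 2 : ℂ), 1 / (Real.sqrt 2 : ℂ)] := by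
    ext i
    fin_cases i <;> simp [X, equatorState]
  rw [← mulVec_mulVec, hX, phaseGate_mulVec]
  ext i
  fin_cases i <;> simp [equatorState, pow_two, mul_assoc, div_eq_mul_inv]

theorem inv_sqrt_two_smul_equatorState_add_neg (ω : ℂ) :
    ((Real.sqrt 2 : ℂ))⁻¹ • (equatorState ω + equatorState (-ω)) = ![1, 0] := by
  have hone : (Real.sqrt 2 : ℂ)⁻¹ * ((Real.sqrt 2 : ℂ)⁻¹ + (Real.sqrt 2 : ℂ)⁻¹) = 1 := by
    linear_combination 2 * inv_sqrt_two_mul_self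
  ext i
  fin_cases i <;> simp [equatorState, neg_div, hone]

theorem fault_tolerant_measurement_circuit_correctness_general {ω : ℂ} (hω : ω ≠ 0) :
    measurementCircuit (phaseGate (ω ^ 2) * X) ω *ᵥ tp (equatorState 1) ![1, 0] =
      ((Real.sqrt 2 : ℂ))⁻¹ •
        (tp ![1, 0] (equatorState ω) + tp ![0, 1] (equatorState (-ω))) := by
  have hplus := phaseGate_sq_mul_X_mulVec_equatorState ω
  have hminus := phaseGate_sq_mul_X_mulVec_equatorState (-ω)
  rw [neg_sq] at hminus
  rw [← measurementCircuit_mulVec_add hω hplus hminus, ← mulVec_smul, ← tp_smul,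
    inv_sqrt_two_smul_equatorState_add_neg]

theorem fault_tolerant_measurement_circuit_correctness (θ : ℝ) :
    let M : Matrix (Fin 2) (Fin 2) ℂ := !![1, 0; 0, Complex.exp (2 * (θ : ℂ) * Complex.I)]
    let P : Matrix (Fin 2) (Fin 2) ℂ := !![1, 0; 0, Complex.exp (-(θ : ℂ) * Complex.I)]
    let vplus : Fin 2 → ℂ :=
      ![(1 : ℂ) / (Real.sqrt 2 : ℂ), Complex.exp ((θ : ℂ) * Complex.I) / (Real.sqrt 2 : ℂ)]
    let vminus : Fin 2 → ℂ :=
      ![(1 : ℂ) / (Real.sqrt 2 : ℂ), -(Complex.exp ((θ : ℂ) * Complex.I) / (Real.sqrt 2 : ℂ))]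
    (((H * P) ⊗ₖ (1 : Matrix (Fin 2) (Fin 2) ℂ)) * ctrl (M * X)).mulVec
        (tp ![(1 : ℂ) / (Real.sqrt 2 : ℂ), (1 : ℂ) / (Real.sqrt 2 : ℂ)] ![1, 0]) =
      ((Real.sqrt 2 : ℂ))⁻¹ • (tp ![1, 0] vplus + tp ![0, 1] vminus) := by
  have hM : Complex.exp (2 * θ * Complex.I) = Complex.exp (θ * Complex.I) ^ 2 := by
    rw [mul_assoc, two_mul, Complex.exp_add, sq]
  have hP : Complex.exp (-θ * Complex.I) = (Complex.exp (θ * Complex.I))⁻¹ := by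
    rw [neg_mul, Complex.exp_neg]
  simpa only [measurementCircuit, phaseGate, equatorState, hM, hP, neg_div] using
    fault_tolerant_measurement_circuit_correctness_general (Complex.exp_ne_zero (θ * Complex.I))

end
end
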